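/- Let S be a real N×N symmetric matrix with zero diagonal such that I−S is invertible, and suppose (I−S)⁻¹ = U·diag(λ)·Uᵀ where U is orthogonal and λⱼ ≠ 0 for all j. Then for every index i, ∑ⱼ Uᵢⱼ²/λⱼ = 1. (Equivalently, the sign vector sign(λ) solves the binary linear system (U∘U)·diag(|λ|⁻¹)·q = 1.) -/

import Mathlib

open Matrix Finset

section

variable {n R : Type*} [Fintype n] [DecidableEq n] [CommRing R]

theorem inv_mul_mul_of_mul_eq_one {U V : Matrix n n R} (hVU : V * U = 1) (D : Matrix n n R) :
    (U * D * V)⁻¹ = U * D⁻¹ * V := by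
  rw [Matrix.mul_inv_rev, Matrix.mul_inv_rev, inv_eq_left_inv hVU, inv_eq_right_inv hVU,
    ← Matrix.mul_assoc]

theorem isUnit_of_isUnit_mul_diagonal_mul {U V : Matrix n n R} {l : n → R}
    (h : IsUnit (U * diagonal l * V)) (j : n) : IsUnit (l j) := by
  rw [isUnit_iff_isUnit_det, det_mul, det_mul, det_diagonal] at h
  exact IsUnit.prod_univ_iff.mp (isUnit_of_mul_isUnit_right (isUnit_of_mul_isUnit_left h)) j

end

section

variable {n K : Type*} [Fintype n] [DecidableEq n] [Field K]

theorem inv_diagonal_of_ne_zero {l : n → K} (hl : ∀ j, l j ≠ 0) :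
    (diagonal l)⁻¹ = diagonal l⁻¹ := by
  apply inv_eq_right_inv
  simp [diagonal_mul_diagonal, hl]

theorem stmt_1_general {A U V : Matrix n n K} {l : n → K} (hA : IsUnit A) (hVU : V * U = 1)
    (hdecomp : A⁻¹ = U * diagonal l * V) (i k : n) :
    ∑ j, U i j * V j k / l j = A i k := by
  have hl : ∀ j, l j ≠ 0 := fun j =>
    (isUnit_of_isUnit_mul_diagonal_mul (hdecomp ▸ isUnit_nonsing_inv_iff.mpr hA) j).ne_zero
  have hA_eq : A = U * diagonal l⁻¹ * V := calc
    A = (A⁻¹)⁻¹ := (nonsing_inv_nonsing_inv A ((isUnit_iff_isUnit_det A).mp hA)).symm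
    _ = U * (diagonal l)⁻¹ * V := by rw [hdecomp, inv_mul_mul_of_mul_eq_one hVU]
    _ = U * diagonal l⁻¹ * V := by rw [inv_diagonal_of_ne_zero hl]
  rw [hA_eq, Matrix.mul_apply]
  simp only [mul_diagonal, Pi.inv_apply, div_eq_mul_inv, mul_right_comm]

end

theorem stmt_1 {N : ℕ} (S U : Matrix (Fin N) (Fin N) ℝ) (l : Fin N → ℝ)
    (hSsym : Sᵀ = S) (hShollow : ∀ i, S i i = 0)
    (hInv : IsUnit (1 - S))
    (hU : Uᵀ * U = 1)
    (hdecomp : (1 - S)⁻¹ = U * Matrix.diagonal l * Uᵀ)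
    (hl : ∀ j, l j ≠ 0) :
    ∀ i, ∑ j, (U i j) ^ 2 / l j = 1 := by
  intro i
  simpa [sq, hShollow i] using stmt_1_general hInv hU hdecomp i i
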